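/- Let r > r₀ > 0 and P ⊂ ℝ² finite with circumradius r₀. Then V₁(S_{r,r₀,2}) ≤ V₁(conv_r P); i.e., among planar r-ball convex hulls of sets of circumradius r₀, the r-spindle has the smallest perimeter. -/

import Mathlib

open Metric Set MeasureTheory Pointwise RealInnerProductSpace

variable {d : ℕ}

/-- The `r`-ball body generated by `X`: the intersection of all closed balls of
radius `r` centered at points of `X`. -/
def ballBody (r : ℝ) (X : Set (EuclideanSpace ℝ (Fin d))) :
    Set (EuclideanSpace ℝ (Fin d)) :=
  ⋂ x ∈ X, closedBall x r

/-- The `r`-ball convex hull of `X`: the intersection of all closed balls of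
radius `r` containing `X`. -/
def ballHull (r : ℝ) (X : Set (EuclideanSpace ℝ (Fin d))) :
    Set (EuclideanSpace ℝ (Fin d)) :=
  ⋂ y ∈ {y : EuclideanSpace ℝ (Fin d) | X ⊆ closedBall y r}, closedBall y r

/-- Volume of the m-dimensional unit ball. -/
noncomputable def unitBallVol (m : ℕ) : ℝ :=
  (volume (closedBall (0 : EuclideanSpace ℝ (Fin m)) 1)).toReal

/-- `V` is a system of intrinsic volumes on `ℝ^d`, i.e. it satisfies the Steiner
formula for all convex bodies. -/
def IsIntrinsicVolumes (d : ℕ)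
    (V : ℕ → Set (EuclideanSpace ℝ (Fin d)) → ℝ) : Prop :=
  ∀ A : Set (EuclideanSpace ℝ (Fin d)), Convex ℝ A → IsCompact A → A.Nonempty →
    (∀ ε : ℝ, 0 < ε →
      (volume (A + ε • closedBall (0 : EuclideanSpace ℝ (Fin d)) 1)).toReal =
        ∑ i ∈ Finset.range (d + 1), unitBallVol (d - i) * V i A * ε ^ (d - i)) ∧
    V 0 A = 1

/-- Point at distance `t` from the origin in direction `θ`. -/
noncomputable def polPt (t θ : ℝ) : EuclideanSpace ℝ (Fin 2) :=
  !₂[t * Real.cos θ, t * Real.sin θ]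

lemma volume_polar (A : Set (EuclideanSpace ℝ (Fin 2))) (hA : MeasurableSet A) :
    volume A = ∫⁻ p in polarCoord.target,
      ENNReal.ofReal p.1 * A.indicator (fun _ => 1) (polPt p.1 p.2) := by
  have h1 : MeasurePreserving
      ((MeasurableEquiv.toLp 2 (Fin 2 → ℝ)).symm.trans (MeasurableEquiv.finTwoArrow (α := ℝ)))
      (volume : Measure (EuclideanSpace ℝ (Fin 2))) (volume : Measure (ℝ × ℝ)) :=
    (volume_preserving_finTwoArrow ℝ).comp
      (EuclideanSpace.volume_preserving_symm_measurableEquiv_toLp (Fin 2))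
  rw [← lintegral_indicator_one hA,
    ← h1.symm.lintegral_comp_emb (MeasurableEquiv.measurableEmbedding _),
    ← lintegral_comp_polarCoord_symm]
  rfl

lemma lintegral_region (ρ : ℝ → ℝ) (hρ : Continuous ρ) (h0 : ∀ θ, 0 ≤ ρ θ) :
    ∫⁻ p in polarCoord.target,
      ENNReal.ofReal p.1 * {p : ℝ × ℝ | p.1 ≤ ρ p.2}.indicator (fun _ => 1) p
      = ENNReal.ofReal (∫ θ in (-Real.pi)..Real.pi, ρ θ ^ 2 / 2) := by
  have hm : MeasurableSet {p : ℝ × ℝ | p.1 ≤ ρ p.2} :=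
    measurableSet_le measurable_fst (hρ.measurable.comp measurable_snd)
  have hmeas : Measurable (fun p : ℝ × ℝ =>
      ENNReal.ofReal p.1 * {p : ℝ × ℝ | p.1 ≤ ρ p.2}.indicator (fun _ => (1 : ENNReal)) p) :=
    (ENNReal.measurable_ofReal.comp measurable_fst).mul (measurable_one.indicator hm)
  have ht : polarCoord.target = Ioi (0:ℝ) ×ˢ Ioo (-Real.pi) Real.pi := rfl
  rw [ht, Measure.volume_eq_prod, ← Measure.prod_restrict,
    lintegral_prod_symm' _ hmeas]
  have inner : ∀ θ : ℝ, ∫⁻ t in Ioi (0:ℝ),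
      ENNReal.ofReal t * {p : ℝ × ℝ | p.1 ≤ ρ p.2}.indicator (fun _ => (1 : ENNReal)) (t, θ)
      = ENNReal.ofReal (ρ θ ^ 2 / 2) := by
    intro θ
    have e1 : ∀ t : ℝ, ENNReal.ofReal t *
        {p : ℝ × ℝ | p.1 ≤ ρ p.2}.indicator (fun _ => (1 : ENNReal)) (t, θ)
        = (Iic (ρ θ)).indicator (fun t => ENNReal.ofReal t) t := by
      intro t
      by_cases h : t ≤ ρ θ <;> simp [indicator, h]
    simp_rw [e1]
    rw [lintegral_indicator measurableSet_Iic, Measure.restrict_restrict measurableSet_Iic,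
      inter_comm, Ioi_inter_Iic, ← ofReal_integral_eq_lintegral_ofReal,
      ← intervalIntegral.integral_of_le (h0 θ)]
    · simp
    · exact (continuous_id.intervalIntegrable _ _).1
    · filter_upwards [ae_restrict_mem measurableSet_Ioc] with t ht using ht.1.le
  simp_rw [inner]
  rw [← ofReal_integral_eq_lintegral_ofReal, intervalIntegral.integral_of_le
    (by linarith [Real.pi_pos]), integral_Ioc_eq_integral_Ioo]
  · have : IntervalIntegrable (fun θ => ρ θ ^ 2 / 2) volume (-Real.pi) Real.pi :=
      Continuous.intervalIntegrable (by fun_prop) _ _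
    exact this.1.mono_set Ioo_subset_Ioc_self
  · exact Filter.Eventually.of_forall fun θ => by positivity

lemma volume_le_of_polar (A : Set (EuclideanSpace ℝ (Fin 2))) (hA : MeasurableSet A)
    (ρ : ℝ → ℝ) (hρ : Continuous ρ) (h0 : ∀ θ, 0 ≤ ρ θ)
    (h : ∀ t θ, 0 < t → polPt t θ ∈ A → t ≤ ρ θ) :
    (volume A).toReal ≤ ∫ θ in (-Real.pi)..Real.pi, ρ θ ^ 2 / 2 := by
  apply ENNReal.toReal_le_of_le_ofReal
  · exact intervalIntegral.integral_nonneg (by linarith [Real.pi_pos]) fun θ _ => by positivity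
  rw [volume_polar A hA, ← lintegral_region ρ hρ h0]
  apply setLIntegral_mono' polarCoord.open_target.measurableSet
  rintro ⟨t, θ⟩ hp
  have ht : 0 < t := hp.1
  gcongr
  by_cases hm : polPt t θ ∈ A
  · simp [indicator, hm, h t θ ht hm]
  · simp [hm]

lemma volume_ge_of_polar (A : Set (EuclideanSpace ℝ (Fin 2))) (hA : MeasurableSet A)
    (hfin : volume A ≠ ⊤)
    (ρ : ℝ → ℝ) (hρ : Continuous ρ) (h0 : ∀ θ, 0 ≤ ρ θ)
    (h : ∀ t θ, 0 < t → t ≤ ρ θ → polPt t θ ∈ A) :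
    ∫ θ in (-Real.pi)..Real.pi, ρ θ ^ 2 / 2 ≤ (volume A).toReal := by
  rw [← ENNReal.ofReal_le_iff_le_toReal hfin, volume_polar A hA, ← lintegral_region ρ hρ h0]
  apply setLIntegral_mono' polarCoord.open_target.measurableSet
  rintro ⟨t, θ⟩ hp
  have ht : 0 < t := hp.1
  gcongr
  by_cases hm : t ≤ ρ θ
  · simp [indicator, hm, h t θ ht hm]
  · simp [hm]

/-- Support function in the direction `θ`. -/
noncomputable def supp (K : Set (EuclideanSpace ℝ (Fin 2))) (θ : ℝ) : ℝ :=
  sSup ((fun y : EuclideanSpace ℝ (Fin 2) => y 0 * Real.cos θ + y 1 * Real.sin θ) '' K)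

section
variable {K : Set (EuclideanSpace ℝ (Fin 2))}

lemma supp_continuous (hK : IsCompact K) : Continuous (supp K) := by
  apply hK.continuous_sSup (f := fun θ (y : EuclideanSpace ℝ (Fin 2)) =>
    y 0 * Real.cos θ + y 1 * Real.sin θ)
  unfold Function.HasUncurry.uncurry
  simp only [Function.hasUncurryInduction]
  fun_prop

lemma supp_periodic : Function.Periodic (supp K) (2 * Real.pi) := by
  intro θ
  simp [supp]

lemma le_supp (hK : IsCompact K) {y} (hy : y ∈ K) (θ : ℝ) :
    y 0 * Real.cos θ + y 1 * Real.sin θ ≤ supp K θ := by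
  apply le_csSup
  · exact (hK.image (by fun_prop)).bddAbove
  · exact ⟨y, hy, rfl⟩

lemma exists_supp (hK : IsCompact K) (hne : K.Nonempty) (θ : ℝ) :
    ∃ y ∈ K, y 0 * Real.cos θ + y 1 * Real.sin θ = supp K θ := by
  exact (hK.image (f := fun y : EuclideanSpace ℝ (Fin 2) =>
    y 0 * Real.cos θ + y 1 * Real.sin θ) (by fun_prop)).sSup_mem (hne.image _)

end

lemma sq_dist_eq (x y : EuclideanSpace ℝ (Fin 2)) :
    dist x y ^ 2 = (x 0 - y 0) ^ 2 + (x 1 - y 1) ^ 2 := by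
  rw [EuclideanSpace.dist_eq, Real.sq_sqrt (by positivity)]
  simp [Real.dist_eq]

lemma dist_le_iff2 (x y : EuclideanSpace ℝ (Fin 2)) {ε : ℝ} (hε : 0 ≤ ε) :
    dist x y ≤ ε ↔ (x 0 - y 0) ^ 2 + (x 1 - y 1) ^ 2 ≤ ε ^ 2 := by
  rw [← sq_dist_eq, sq_le_sq₀ dist_nonneg hε]

lemma mem_add_smul_ball (K : Set (EuclideanSpace ℝ (Fin 2))) {ε : ℝ} (hε : 0 < ε)
    (z : EuclideanSpace ℝ (Fin 2)) :
    z ∈ K + ε • closedBall (0 : EuclideanSpace ℝ (Fin 2)) 1 ↔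
      ∃ y ∈ K, (z 0 - y 0) ^ 2 + (z 1 - y 1) ^ 2 ≤ ε ^ 2 := by
  rw [smul_unitClosedBall, Real.norm_of_nonneg hε.le]
  constructor
  · rintro ⟨y, hy, w, hw, rfl⟩
    refine ⟨y, hy, ?_⟩
    rw [← dist_le_iff2 _ _ hε.le]
    simpa using hw
  · rintro ⟨y, hy, h⟩
    rw [← dist_le_iff2 _ _ hε.le] at h
    refine ⟨y, hy, z - y, ?_, by simp⟩
    simpa [dist_eq_norm] using h

lemma trig_cs (a b c s ε : ℝ) (h : c ^ 2 + s ^ 2 = 1) (hε : 0 ≤ ε) (hab : a ^ 2 + b ^ 2 ≤ ε ^ 2) :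
    a * c + b * s ≤ ε := by
  apply le_of_sq_le_sq _ hε
  nlinarith [sq_nonneg (a * s - b * c)]

/-- Cauchy's formula, derived from the asymptotics of the Steiner formula. -/
lemma cauchy_formula (V : ℕ → Set (EuclideanSpace ℝ (Fin 2)) → ℝ) (hV : IsIntrinsicVolumes 2 V)
    (K : Set (EuclideanSpace ℝ (Fin 2))) (hconv : Convex ℝ K) (hK : IsCompact K)
    (hne : K.Nonempty) :
    unitBallVol 1 * V 1 K = ∫ θ in (-Real.pi)..Real.pi, supp K θ := by
  obtain ⟨hS, h0⟩ := hV K hconv hK hne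
  have hu2 : unitBallVol 2 = Real.pi := by
    simp [unitBallVol, Real.pi_pos.le]
  obtain ⟨R, hR0, hR⟩ : ∃ R : ℝ, 0 < R ∧ ∀ y ∈ K, (y 0) ^ 2 + (y 1) ^ 2 ≤ R ^ 2 := by
    obtain ⟨R, hR0, hR⟩ := hK.isBounded.subset_closedBall_lt 0 (0 : EuclideanSpace ℝ (Fin 2))
    refine ⟨R, hR0, fun y hy => ?_⟩
    have := (dist_le_iff2 _ _ hR0.le).1 (hR hy)
    simpa using this
  have hsR : ∀ θ, |supp K θ| ≤ R := by
    intro θ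
    obtain ⟨y, hy, hyθ⟩ := exists_supp hK hne θ
    rw [← hyθ, abs_le]
    have h1 := trig_cs (y 0) (y 1) _ _ R (Real.cos_sq_add_sin_sq θ) hR0.le (hR y hy)
    have h2 := trig_cs (-y 0) (-y 1) _ _ R (Real.cos_sq_add_sin_sq θ) hR0.le
      (by simpa using hR y hy)
    constructor <;> linarith
  have hc := supp_continuous hK
  set I := ∫ θ in (-Real.pi)..Real.pi, supp K θ with hI
  set J := ∫ θ in (-Real.pi)..Real.pi, supp K θ ^ 2 with hJ
  have hS' : ∀ ε : ℝ, 0 < ε →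
      (volume (K + ε • closedBall (0 : EuclideanSpace ℝ (Fin 2)) 1)).toReal
      = Real.pi * ε ^ 2 + unitBallVol 1 * V 1 K * ε + unitBallVol 0 * V 2 K := by
    intro ε hε
    rw [hS ε hε]
    simp [Finset.sum_range_succ, h0, hu2]
  have hcomp : ∀ ε : ℝ, IsCompact (K + ε • closedBall (0 : EuclideanSpace ℝ (Fin 2)) 1) :=
    fun ε => hK.add ((isCompact_closedBall _ _).smul ε)
  have upper : ∀ ε : ℝ, 2 * R ≤ ε →
      Real.pi * ε ^ 2 + unitBallVol 1 * V 1 K * ε + unitBallVol 0 * V 2 K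
        ≤ Real.pi * ε ^ 2 + I * ε + J / 2 := by
    intro ε hε
    have hε0 : 0 < ε := by linarith
    rw [← hS' ε hε0]
    refine (volume_le_of_polar _ (hcomp ε).measurableSet (fun θ => ε + supp K θ)
      (by fun_prop) (fun θ => by linarith [(abs_le.1 (hsR θ)).1]) ?_).trans_eq ?_
    · intro t θ ht hm
      obtain ⟨y, hy, hyt⟩ := (mem_add_smul_ball K hε0 _).1 hm
      have h1 := trig_cs _ _ _ _ ε (Real.cos_sq_add_sin_sq θ) hε0.le hyt
      have h2 := le_supp hK hy θ
      simp only [polPt, PiLp.toLp_apply, Matrix.cons_val_zero, Matrix.cons_val_one] at h1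
      nlinarith [Real.cos_sq_add_sin_sq θ]
    · have e : ∀ θ, (ε + supp K θ) ^ 2 / 2 = ε ^ 2 / 2 + (ε * supp K θ + supp K θ ^ 2 / 2) := by
        intro θ; ring
      simp_rw [e]
      rw [intervalIntegral.integral_add (Continuous.intervalIntegrable (by fun_prop) _ _)
        (Continuous.intervalIntegrable (by fun_prop) _ _),
        intervalIntegral.integral_add (Continuous.intervalIntegrable (by fun_prop) _ _)
        (Continuous.intervalIntegrable (by fun_prop) _ _)]
      simp only [intervalIntegral.integral_const, intervalIntegral.integral_const_mul,
        intervalIntegral.integral_div, ← hI, ← hJ, smul_eq_mul]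
      ring
  have lower : ∀ ε : ℝ, 2 * R ≤ ε →
      Real.pi * ε ^ 2 + I * ε - 2 * Real.pi * R ^ 2
      ≤ Real.pi * ε ^ 2 + unitBallVol 1 * V 1 K * ε + unitBallVol 0 * V 2 K := by
    intro ε hε
    have hε0 : 0 < ε := by linarith
    rw [← hS' ε hε0]
    have hd : ε * (R ^ 2 / ε) = R ^ 2 := by field_simp
    set δ := R ^ 2 / ε with hδ
    have hδ0 : 0 < δ := by positivity
    have hδR : δ ≤ R / 2 := by
      rw [hδ, div_le_iff₀ hε0]; nlinarith
    refine le_trans ?_ (volume_ge_of_polar _ (hcomp ε).measurableSet (hcomp ε).measure_lt_top.ne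
      (fun θ => ε + supp K θ - δ)
      (by fun_prop) (fun θ => by linarith [(abs_le.1 (hsR θ)).1]) ?_)
    · have e : Real.pi * ε ^ 2 + I * ε - 2 * Real.pi * R ^ 2
          = ∫ θ in (-Real.pi)..Real.pi, ((ε ^ 2 / 2 - R ^ 2) + ε * supp K θ) := by
        rw [intervalIntegral.integral_add (Continuous.intervalIntegrable (by fun_prop) _ _)
          (Continuous.intervalIntegrable (by fun_prop) _ _)]
        simp only [intervalIntegral.integral_const, intervalIntegral.integral_const_mul,
          ← hI, smul_eq_mul]
        ring
      rw [e]
      apply intervalIntegral.integral_mono_on (by linarith [Real.pi_pos])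
        (Continuous.intervalIntegrable (by fun_prop) _ _)
        (Continuous.intervalIntegrable (by fun_prop) _ _)
      intro θ _
      nlinarith [sq_nonneg (supp K θ - δ)]
    · intro t θ ht hm
      obtain ⟨y, hy, hyθ⟩ := exists_supp hK hne θ
      rw [mem_add_smul_ball K hε0]
      refine ⟨y, hy, ?_⟩
      have h1 := hR y hy
      have h2 := abs_le.1 (hsR θ)
      have h3 : (t - supp K θ) ^ 2 ≤ (ε - δ) ^ 2 := by
        apply sq_le_sq'
        · linarith
        · linarith
      have h4 : (ε - δ) ^ 2 + R ^ 2 ≤ ε ^ 2 := by nlinarith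
      have h5 := Real.cos_sq_add_sin_sq θ
      simp only [polPt, PiLp.toLp_apply, Matrix.cons_val_zero, Matrix.cons_val_one]
      have h6 : (t * Real.cos θ - y 0) ^ 2 + (t * Real.sin θ - y 1) ^ 2
          = t ^ 2 * (Real.cos θ ^ 2 + Real.sin θ ^ 2) - 2 * t * supp K θ
            + (y 0 ^ 2 + y 1 ^ 2) := by rw [← hyθ]; ring
      rw [h6, h5]
      nlinarith [sq_nonneg (supp K θ)]
  have key : ∀ a b R₀ : ℝ, (∀ ε, R₀ ≤ ε → a * ε ≤ b) → a ≤ 0 := by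
    intro a b R₀ h
    by_contra ha
    push Not at ha
    have := h (max R₀ ((b + 1) / a)) (le_max_left _ _)
    have h2 : (b + 1) / a ≤ max R₀ ((b + 1) / a) := le_max_right _ _
    rw [div_le_iff₀ ha] at h2
    linarith
  apply le_antisymm
  · have := key (unitBallVol 1 * V 1 K - I) (J / 2 - unitBallVol 0 * V 2 K) (2 * R)
      (fun ε hε => by linarith [upper ε hε])
    linarith
  · have := key (I - unitBallVol 1 * V 1 K) (2 * Real.pi * R ^ 2 + unitBallVol 0 * V 2 K) (2 * R)
      (fun ε hε => by linarith [lower ε hε])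
    linarith

lemma arcsin_concave (k : ℝ) (hk0 : 0 < k) (hk1 : k < 1) :
    ConcaveOn ℝ (Icc 0 (Real.pi / 2)) (fun α => Real.arcsin (k * Real.sin α)) := by
  have hlt : ∀ α, k * Real.sin α < 1 := fun α => by nlinarith [Real.sin_le_one α]
  have hgt : ∀ α, -1 < k * Real.sin α := fun α => by nlinarith [Real.neg_one_le_sin α]
  have hd : ∀ α, HasDerivAt (fun α => Real.arcsin (k * Real.sin α))
      (1 / √(1 - (k * Real.sin α) ^ 2) * (k * Real.cos α)) α := by
    intro α
    exact (Real.hasDerivAt_arcsin (hgt α).ne' (hlt α).ne).comp α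
      ((Real.hasDerivAt_sin α).const_mul k)
  apply AntitoneOn.concaveOn_of_deriv (convex_Icc _ _)
  · exact (Real.continuous_arcsin.comp (by fun_prop)).continuousOn
  · intro α _
    exact (hd α).differentiableAt.differentiableWithinAt
  · rw [interior_Icc]
    intro α hα β hβ hab
    rw [(hd α).deriv, (hd β).deriv]
    have hsa : 0 ≤ Real.sin α := Real.sin_nonneg_of_nonneg_of_le_pi hα.1.le
      (by linarith [hα.2, Real.pi_pos])
    have hsb : Real.sin α ≤ Real.sin β := Real.sin_le_sin_of_le_of_le_pi_div_two
      (by linarith [hα.1, Real.pi_pos]) hβ.2.le hab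
    have hca : 0 ≤ Real.cos α := Real.cos_nonneg_of_mem_Icc ⟨by linarith [hα.1, Real.pi_pos], hα.2.le⟩
    have hcb : 0 ≤ Real.cos β := Real.cos_nonneg_of_mem_Icc ⟨by linarith [hβ.1, Real.pi_pos], hβ.2.le⟩
    have pa : 0 < 1 - (k * Real.sin α) ^ 2 := by nlinarith [hlt α, hgt α]
    have pb : 0 < 1 - (k * Real.sin β) ^ 2 := by nlinarith [hlt β, hgt β]
    have sa := Real.sqrt_pos.2 pa
    have sb := Real.sqrt_pos.2 pb
    rw [one_div_mul_eq_div, one_div_mul_eq_div, div_le_div_iff₀ sb sa]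
    apply le_of_sq_le_sq _ (by positivity)
    rw [mul_pow, mul_pow (k * Real.cos α), Real.sq_sqrt pa.le, Real.sq_sqrt pb.le]
    simp only [mul_pow, Real.cos_sq']
    have h1 : Real.sin α ^ 2 ≤ Real.sin β ^ 2 := by gcongr
    have h2 : 0 ≤ k ^ 2 * ((1 - k ^ 2) * (Real.sin β ^ 2 - Real.sin α ^ 2)) := by
      apply mul_nonneg (by positivity) (mul_nonneg (by nlinarith) (by linarith))
    nlinarith

/-- Spreading two points with fixed sum decreases the sum of a concave function. -/
lemma concave_spread {f : ℝ → ℝ} {M a b c d : ℝ} (hf : ConcaveOn ℝ (Icc 0 M) f)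
    (ha : 0 ≤ a) (hb : b ≤ M) (hac : a ≤ c) (had : a ≤ d) (hs : a + b = c + d) :
    f a + f b ≤ f c + f d := by
  rcases eq_or_lt_of_le (show a ≤ b by linarith) with hab | hab
  · have h1 : c = a := by linarith
    have h2 : d = a := by linarith
    rw [h1, h2, hab]
  · have hA : a ∈ Icc 0 M := ⟨ha, by linarith⟩
    have hB : b ∈ Icc 0 M := ⟨by linarith, hb⟩
    have hba : 0 < b - a := by linarith
    set s := (c - a) / (b - a) with hsdef
    have hs' : s * (b - a) = c - a := by rw [hsdef]; field_simp
    have hs0 : 0 ≤ s := div_nonneg (by linarith) hba.le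
    have hs1 : s ≤ 1 := by rw [hsdef, div_le_one hba]; linarith
    have h1 := hf.2 hA hB (show 0 ≤ 1 - s by linarith) hs0 (by ring)
    have h2 := hf.2 hA hB hs0 (show 0 ≤ 1 - s by linarith) (by ring)
    simp only [smul_eq_mul] at h1 h2
    rw [show (1 - s) * a + s * b = c by linarith] at h1
    rw [show s * a + (1 - s) * b = d by linarith] at h2
    linarith

lemma arcsin_sum_ge (k : ℝ) (hk0 : 0 < k) (hk1 : k < 1) (a b c : ℝ) (ha0 : 0 ≤ a)
    (ha : a ≤ Real.pi / 2) (hb : b ≤ Real.pi / 2) (hc : c ≤ Real.pi / 2)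
    (hs : a + b + c = Real.pi) :
    2 * Real.arcsin k ≤ Real.arcsin (k * Real.sin a) + Real.arcsin (k * Real.sin b)
      + Real.arcsin (k * Real.sin c) := by
  have hf := arcsin_concave k hk0 hk1
  have h1 := concave_spread hf (a := b + c - Real.pi / 2) (b := Real.pi / 2) (c := b) (d := c)
    (by linarith) le_rfl (by linarith) (by linarith) (by ring)
  have h2 := concave_spread hf (a := 0) (b := Real.pi / 2) (c := a) (d := b + c - Real.pi / 2)
    le_rfl le_rfl (by linarith) (by linarith) (by linarith)
  simp at h1 h2
  linarith

/-- The length of the arc through the normal sector. -/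
lemma sector_integral (r r₀ m α a : ℝ) (h : r * Real.sin a = r₀ * Real.sin α) :
    (∫ θ in (m - α)..(m - a), r₀ * Real.cos (θ - (m - α)))
    + (∫ θ in (m - a)..(m + a), (r + (r₀ * Real.cos α - r * Real.cos a) * Real.cos (θ - m)))
    + (∫ θ in (m + a)..(m + α), r₀ * Real.cos (θ - (m + α))) = 2 * r * a := by
  rw [intervalIntegral.integral_add (Continuous.intervalIntegrable (by fun_prop) _ _)
    (Continuous.intervalIntegrable (by fun_prop) _ _)]
  simp only [intervalIntegral.integral_const_mul, intervalIntegral.integral_const,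
    intervalIntegral.integral_comp_sub_right (fun x => Real.cos x), integral_cos, smul_eq_mul]
  rw [show m - a - (m - α) = α - a by ring, show m - α - (m - α) = 0 by ring,
    show m + a - m = a by ring, show m - a - m = -a by ring, show m + α - (m + α) = 0 by ring,
    show m + a - (m + α) = -(α - a) by ring, Real.sin_neg, Real.sin_neg, Real.sin_sub, Real.sin_zero]
  linear_combination (-2 * Real.cos a) * h

lemma sector_lower (h : ℝ → ℝ) (hc : Continuous h) (r r₀ m α a : ℝ) (ha0 : 0 ≤ a) (haα : a ≤ α)
    (h0 : r * Real.sin a = r₀ * Real.sin α)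
    (h1 : ∀ θ ∈ Icc (m - α) (m - a), r₀ * Real.cos (θ - (m - α)) ≤ h θ)
    (h2 : ∀ θ ∈ Icc (m - a) (m + a),
      r + (r₀ * Real.cos α - r * Real.cos a) * Real.cos (θ - m) ≤ h θ)
    (h3 : ∀ θ ∈ Icc (m + a) (m + α), r₀ * Real.cos (θ - (m + α)) ≤ h θ) :
    2 * r * a ≤ ∫ θ in (m - α)..(m + α), h θ := by
  have hi : ∀ x y, IntervalIntegrable h volume x y := fun x y => hc.intervalIntegrable x y
  rw [← sector_integral r r₀ m α a h0,
    ← intervalIntegral.integral_add_adjacent_intervals (hi (m - α) (m + a)) (hi _ _),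
    ← intervalIntegral.integral_add_adjacent_intervals (hi (m - α) (m - a)) (hi _ _)]
  gcongr
  · exact intervalIntegral.integral_mono_on (by linarith)
      (Continuous.intervalIntegrable (by fun_prop) _ _) (hi _ _) h1
  · exact intervalIntegral.integral_mono_on (by linarith)
      (Continuous.intervalIntegrable (by fun_prop) _ _) (hi _ _) h2
  · exact intervalIntegral.integral_mono_on (by linarith)
      (Continuous.intervalIntegrable (by fun_prop) _ _) (hi _ _) h3

lemma sector_upper (h : ℝ → ℝ) (hc : Continuous h) (r r₀ m α a : ℝ) (ha0 : 0 ≤ a) (haα : a ≤ α)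
    (h0 : r * Real.sin a = r₀ * Real.sin α)
    (h1 : ∀ θ ∈ Icc (m - α) (m - a), h θ ≤ r₀ * Real.cos (θ - (m - α)))
    (h2 : ∀ θ ∈ Icc (m - a) (m + a),
      h θ ≤ r + (r₀ * Real.cos α - r * Real.cos a) * Real.cos (θ - m))
    (h3 : ∀ θ ∈ Icc (m + a) (m + α), h θ ≤ r₀ * Real.cos (θ - (m + α))) :
    ∫ θ in (m - α)..(m + α), h θ ≤ 2 * r * a := by
  have hi : ∀ x y, IntervalIntegrable h volume x y := fun x y => hc.intervalIntegrable x y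
  rw [← sector_integral r r₀ m α a h0,
    ← intervalIntegral.integral_add_adjacent_intervals (hi (m - α) (m + a)) (hi _ _),
    ← intervalIntegral.integral_add_adjacent_intervals (hi (m - α) (m - a)) (hi _ _)]
  gcongr
  · exact intervalIntegral.integral_mono_on (by linarith) (hi _ _)
      (Continuous.intervalIntegrable (by fun_prop) _ _) h1
  · exact intervalIntegral.integral_mono_on (by linarith) (hi _ _)
      (Continuous.intervalIntegrable (by fun_prop) _ _) h2
  · exact intervalIntegral.integral_mono_on (by linarith) (hi _ _)
      (Continuous.intervalIntegrable (by fun_prop) _ _) h3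

@[simp] lemma polPt_zero (t θ : ℝ) : polPt t θ 0 = t * Real.cos θ := by simp [polPt]
@[simp] lemma polPt_one (t θ : ℝ) : polPt t θ 1 = t * Real.sin θ := by simp [polPt]

lemma mem_ballHull {r : ℝ} {X : Set (EuclideanSpace ℝ (Fin 2))} {y : EuclideanSpace ℝ (Fin 2)} :
    y ∈ ballHull r X ↔ ∀ z, X ⊆ closedBall z r → y ∈ closedBall z r := by
  simp [ballHull]

lemma subset_ballHull (r : ℝ) (X : Set (EuclideanSpace ℝ (Fin 2))) : X ⊆ ballHull r X :=
  fun _ hy => mem_ballHull.2 fun _ hz => hz hy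

lemma ballHull_convex (r : ℝ) (X : Set (EuclideanSpace ℝ (Fin 2))) :
    Convex ℝ (ballHull r X) :=
  convex_iInter₂ fun y _ => convex_closedBall y r

lemma ballHull_compact {r : ℝ} {X : Set (EuclideanSpace ℝ (Fin 2))} {c}
    (hc : X ⊆ closedBall c r) : IsCompact (ballHull r X) := by
  apply (isCompact_closedBall c r).of_isClosed_subset
  · exact isClosed_biInter fun y _ => isClosed_closedBall
  · exact fun y hy => mem_ballHull.1 hy c hc

lemma rot_identity (C S A B y z : ℝ) (h : C ^ 2 + S ^ 2 = 1) :
    (C * A - S * B - y) ^ 2 + (S * A + C * B - z) ^ 2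
      = (A - (C * y + S * z)) ^ 2 + (B - (C * z - S * y)) ^ 2 := by
  linear_combination (A ^ 2 + B ^ 2 - y ^ 2 - z ^ 2) * h

lemma arc_core (r a ψ s t : ℝ) (hr : 0 < r) (ha0 : 0 ≤ a) (ha : a < Real.pi / 2) (hψ : |ψ| ≤ a)
    (h1 : (r * Real.cos a - s) ^ 2 + (r * Real.sin a - t) ^ 2 ≤ r ^ 2)
    (h2 : (r * Real.cos a - s) ^ 2 + (-(r * Real.sin a) - t) ^ 2 ≤ r ^ 2) :
    (r * Real.cos ψ - s) ^ 2 + (r * Real.sin ψ - t) ^ 2 ≤ r ^ 2 := by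
  have hc : 0 < Real.cos a := Real.cos_pos_of_mem_Ioo ⟨by linarith, ha⟩
  have hψ' := abs_le.1 hψ
  have hcc : Real.cos a ≤ Real.cos ψ := by
    rw [← Real.cos_abs ψ]
    exact Real.cos_le_cos_of_nonneg_of_le_pi (abs_nonneg _) (by linarith) hψ
  have hs1 : Real.sin ψ ≤ Real.sin a :=
    Real.sin_le_sin_of_le_of_le_pi_div_two (by linarith) ha.le hψ'.2
  have hs2 : -Real.sin a ≤ Real.sin ψ := by
    rw [← Real.sin_neg]
    exact Real.sin_le_sin_of_le_of_le_pi_div_two (by linarith) (by linarith) hψ'.1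
  have e1 := Real.cos_sq_add_sin_sq a
  have e2 := Real.cos_sq_add_sin_sq ψ
  have k1 : s ^ 2 + t ^ 2 ≤ 2 * r * (s * Real.cos a + t * Real.sin a) := by
    linear_combination h1 - r ^ 2 * e1
  have k2 : s ^ 2 + t ^ 2 ≤ 2 * r * (s * Real.cos a - t * Real.sin a) := by
    linear_combination h2 - r ^ 2 * e1
  have hs : 0 ≤ s := by
    have : 0 ≤ r * (s * Real.cos a) := by nlinarith [sq_nonneg s, sq_nonneg t]
    by_contra hneg
    push Not at hneg
    have := mul_pos hr (mul_pos (neg_pos.2 hneg) hc)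
    linarith
  suffices s ^ 2 + t ^ 2 ≤ 2 * r * (s * Real.cos ψ + t * Real.sin ψ) by
    linear_combination this + r ^ 2 * e2
  have hsc : s * Real.cos a ≤ s * Real.cos ψ := by gcongr
  rcases le_total 0 t with ht | ht
  · refine k2.trans ?_
    gcongr 2 * r * ?_
    nlinarith
  · refine k1.trans ?_
    gcongr 2 * r * ?_
    nlinarith

lemma arc_mem (X : Set (EuclideanSpace ℝ (Fin 2))) (c : EuclideanSpace ℝ (Fin 2))
    (r r₀ m α a ψ : ℝ) (hr : 0 < r) (ha0 : 0 ≤ a) (ha : a < Real.pi / 2)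
    (hψ : |ψ| ≤ a) (h0 : r * Real.sin a = r₀ * Real.sin α)
    (h1 : c + polPt r₀ (m - α) ∈ X) (h2 : c + polPt r₀ (m + α) ∈ X) :
    c + polPt (r₀ * Real.cos α - r * Real.cos a) m + polPt r (m + ψ) ∈ ballHull r X := by
  rw [mem_ballHull]
  intro z hz
  have k1 := (dist_le_iff2 _ _ hr.le).1 (hz h1)
  have k2 := (dist_le_iff2 _ _ hr.le).1 (hz h2)
  rw [mem_closedBall, dist_le_iff2 _ _ hr.le]
  simp only [PiLp.add_apply, polPt_zero, polPt_one, Real.cos_add, Real.sin_add, Real.cos_sub,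
    Real.sin_sub] at k1 k2 ⊢
  set κ := r₀ * Real.cos α - r * Real.cos a with hκ
  set y := z 0 - c 0 - κ * Real.cos m
  set w := z 1 - c 1 - κ * Real.sin m
  have hm := Real.cos_sq_add_sin_sq m
  have core := arc_core r a ψ (Real.cos m * y + Real.sin m * w) (Real.cos m * w - Real.sin m * y)
    hr ha0 ha hψ
  rw [← rot_identity _ _ _ _ _ _ hm, ← rot_identity _ _ _ _ _ _ hm,
    ← rot_identity _ _ _ _ _ _ hm] at core
  have := core ?_ ?_
  · convert this using 3 <;> ring
  · convert k2 using 3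
    · linear_combination (-Real.sin m) * h0
    · linear_combination (Real.cos m) * h0
  · convert k1 using 3
    · linear_combination (Real.sin m) * h0
    · linear_combination (-Real.cos m) * h0

lemma arcsin_facts (k α : ℝ) (hk0 : 0 < k) (hk1 : k < 1) (hα0 : 0 ≤ α) (hα : α ≤ Real.pi / 2) :
    0 ≤ Real.arcsin (k * Real.sin α) ∧ Real.arcsin (k * Real.sin α) ≤ α ∧
    Real.arcsin (k * Real.sin α) < Real.pi / 2 ∧
    Real.sin (Real.arcsin (k * Real.sin α)) = k * Real.sin α := by
  have hs : 0 ≤ Real.sin α := Real.sin_nonneg_of_nonneg_of_le_pi hα0 (by linarith [Real.pi_pos])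
  have hs1 := Real.sin_le_one α
  refine ⟨Real.arcsin_nonneg.2 (by positivity), ?_, ?_, Real.sin_arcsin ?_ ?_⟩
  · calc _ ≤ Real.arcsin (Real.sin α) := Real.arcsin_le_arcsin (by nlinarith)
      _ = α := Real.arcsin_sin (by linarith) hα
  · rw [Real.arcsin_lt_pi_div_two]; nlinarith
  · nlinarith
  · nlinarith

lemma hull_sector (X : Set (EuclideanSpace ℝ (Fin 2))) (c : EuclideanSpace ℝ (Fin 2))
    (r r₀ τ₁ τ₂ : ℝ) (hr₀ : 0 < r₀) (hr : r₀ < r) (hK : IsCompact (ballHull r X))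
    (hτ : τ₁ ≤ τ₂) (hτ' : τ₂ - τ₁ ≤ Real.pi)
    (h1 : c + polPt r₀ τ₁ ∈ X) (h2 : c + polPt r₀ τ₂ ∈ X) :
    2 * r * Real.arcsin (r₀ / r * Real.sin ((τ₂ - τ₁) / 2)) ≤
      ∫ θ in τ₁..τ₂, (supp (ballHull r X) θ - (c 0 * Real.cos θ + c 1 * Real.sin θ)) := by
  have hrp : 0 < r := by linarith
  obtain ⟨α, hα⟩ : ∃ α, α = (τ₂ - τ₁) / 2 := ⟨_, rfl⟩
  obtain ⟨m, hm⟩ : ∃ m, m = (τ₂ + τ₁) / 2 := ⟨_, rfl⟩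
  obtain rfl : τ₁ = m - α := by rw [hα, hm]; ring
  obtain rfl : τ₂ = m + α := by linarith
  rw [← hα]
  obtain ⟨f1, f2, f3, f4⟩ := arcsin_facts (r₀ / r) α (by positivity)
    (by rw [div_lt_one hrp]; exact hr) (by linarith) (by linarith)
  have h0 : r * Real.sin (Real.arcsin (r₀ / r * Real.sin α)) = r₀ * Real.sin α := by
    rw [f4]; field_simp
  set a := Real.arcsin (r₀ / r * Real.sin α)
  have hc := supp_continuous hK
  apply sector_lower _ (by fun_prop) r r₀ m α a f1 f2 h0
  · intro θ _
    have := le_supp hK (subset_ballHull r X h1) θ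
    simp only [PiLp.add_apply, polPt_zero, polPt_one] at this
    rw [Real.cos_sub θ (m - α)]
    linarith
  · intro θ hθ
    have := le_supp hK (arc_mem X c r r₀ m α a (θ - m) hrp f1 f3
      (abs_le.2 ⟨by linarith [hθ.1], by linarith [hθ.2]⟩) h0 h1 h2) θ
    rw [show m + (θ - m) = θ by ring] at this
    simp only [PiLp.add_apply, polPt_zero, polPt_one] at this
    rw [Real.cos_sub θ m]
    linear_combination this - r * Real.cos_sq_add_sin_sq θ
  · intro θ _
    have := le_supp hK (subset_ballHull r X h2) θ
    simp only [PiLp.add_apply, polPt_zero, polPt_one] at this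
    rw [Real.cos_sub θ (m + α)]
    linarith

lemma vertex_upper (X : Set (EuclideanSpace ℝ (Fin 2))) (r r₀ τ θ : ℝ) (hr₀ : 0 < r₀)
    (hr : r₀ < r) (hX : ∀ p ∈ X, p = polPt r₀ τ ∨ p = polPt (-r₀) τ)
    (h : r₀ ≤ r * Real.cos (θ - τ)) (y : EuclideanSpace ℝ (Fin 2)) (hy : y ∈ ballHull r X) :
    y 0 * Real.cos θ + y 1 * Real.sin θ ≤ r₀ * Real.cos (θ - τ) := by
  have hrp : 0 < r := by linarith
  have eθ := Real.cos_sq_add_sin_sq θ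
  have eτ := Real.cos_sq_add_sin_sq τ
  rw [Real.cos_sub] at h ⊢
  have hy' := mem_ballHull.1 hy (polPt r₀ τ + polPt (-r) θ) (by
    intro p hp
    rw [mem_closedBall, dist_le_iff2 _ _ hrp.le]
    rcases hX p hp with rfl | rfl
    · simp only [PiLp.add_apply, polPt_zero, polPt_one]
      exact le_of_eq (by linear_combination r ^ 2 * eθ)
    · simp only [PiLp.add_apply, polPt_zero, polPt_one]
      have := mul_le_mul_of_nonneg_left h hr₀.le
      linear_combination 4 * this + r ^ 2 * eθ + 4 * r₀ ^ 2 * eτ)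
  rw [mem_closedBall, dist_le_iff2 _ _ hrp.le] at hy'
  simp only [PiLp.add_apply, polPt_zero, polPt_one] at hy'
  by_contra hneg
  push Not at hneg
  have h5 := mul_pos hrp (sub_pos.2 hneg)
  nlinarith [sq_nonneg (y 0 - r₀ * Real.cos τ), sq_nonneg (y 1 - r₀ * Real.sin τ)]

lemma spindle_sector (X : Set (EuclideanSpace ℝ (Fin 2)))
    (r r₀ τ : ℝ) (hr₀ : 0 < r₀) (hr : r₀ < r) (hK : IsCompact (ballHull r X))
    (hne : (ballHull r X).Nonempty)
    (hX : ∀ p ∈ X, p = polPt r₀ τ ∨ p = polPt (-r₀) τ) :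
    ∫ θ in τ..(τ + Real.pi), supp (ballHull r X) θ ≤ 2 * r * Real.arcsin (r₀ / r) := by
  have hrp : 0 < r := by linarith
  obtain ⟨m, hm⟩ : ∃ m, m = τ + Real.pi / 2 := ⟨_, rfl⟩
  obtain rfl : τ = m - Real.pi / 2 := by linarith
  rw [show m - Real.pi / 2 + Real.pi = m + Real.pi / 2 by ring]
  obtain ⟨f1, f2, f3, f4⟩ := arcsin_facts (r₀ / r) (Real.pi / 2) (by positivity)
    (by rw [div_lt_one hrp]; exact hr) (by linarith [Real.pi_pos]) le_rfl
  rw [Real.sin_pi_div_two, mul_one] at f1 f2 f3 f4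
  have h0 : r * Real.sin (Real.arcsin (r₀ / r)) = r₀ := by
    rw [f4]; field_simp
  set a := Real.arcsin (r₀ / r)
  have hX2 : ∀ p ∈ X, p = polPt r₀ (m + Real.pi / 2) ∨ p = polPt (-r₀) (m + Real.pi / 2) := by
    have e1 : polPt (-r₀) (m + Real.pi / 2) = polPt r₀ (m - Real.pi / 2) := by
      simp [polPt, Real.cos_sub_pi_div_two, Real.sin_sub_pi_div_two, Real.cos_add_pi_div_two,
        Real.sin_add_pi_div_two]
    have e2 : polPt r₀ (m + Real.pi / 2) = polPt (-r₀) (m - Real.pi / 2) := by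
      simp [polPt, Real.cos_sub_pi_div_two, Real.sin_sub_pi_div_two, Real.cos_add_pi_div_two,
        Real.sin_add_pi_div_two]
    intro p hp
    rw [e1, e2]
    exact (hX p hp).symm
  apply sector_upper _ (supp_continuous hK) r r₀ m (Real.pi / 2) a f1 f2
    (by rw [Real.sin_pi_div_two, mul_one]; exact h0)
  · intro θ hθ
    obtain ⟨y, hy, hyθ⟩ := exists_supp hK hne θ
    rw [← hyθ]
    refine vertex_upper X r r₀ _ θ hr₀ hr hX ?_ y hy
    rw [show θ - (m - Real.pi / 2) = Real.pi / 2 - (m - θ) by ring, Real.cos_pi_div_two_sub]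
    rw [← h0]
    gcongr
    exact Real.sin_le_sin_of_le_of_le_pi_div_two (by linarith [Real.pi_pos]) (by linarith [hθ.1])
      (by linarith [hθ.2])
  · intro θ hθ
    obtain ⟨y, hy, hyθ⟩ := exists_supp hK hne θ
    rw [← hyθ]
    have em := Real.cos_sq_add_sin_sq m
    have ea := Real.cos_sq_add_sin_sq a
    have hy' := mem_ballHull.1 hy (polPt (-(r * Real.cos a)) m) (by
      intro p hp
      rw [mem_closedBall, dist_le_iff2 _ _ hrp.le]
      rcases hX p hp with rfl | rfl <;>
      · simp only [polPt_zero, polPt_one, Real.cos_sub_pi_div_two, Real.sin_sub_pi_div_two]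
        rw [← h0]
        exact le_of_eq (by linear_combination r ^ 2 * em * Real.cos a ^ 2 +
          r ^ 2 * em * Real.sin a ^ 2 + r ^ 2 * ea))
    rw [mem_closedBall, dist_le_iff2 _ _ hrp.le] at hy'
    have := trig_cs _ _ _ _ r (Real.cos_sq_add_sin_sq θ) hrp.le hy'
    simp only [polPt_zero, polPt_one] at this
    rw [Real.cos_pi_div_two, Real.cos_sub θ m]
    linarith
  · intro θ hθ
    obtain ⟨y, hy, hyθ⟩ := exists_supp hK hne θ
    rw [← hyθ]
    refine vertex_upper X r r₀ _ θ hr₀ hr hX2 ?_ y hy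
    rw [show θ - (m + Real.pi / 2) = (θ - m) - Real.pi / 2 by ring, Real.cos_sub_pi_div_two]
    rw [← h0]
    gcongr
    exact Real.sin_le_sin_of_le_of_le_pi_div_two (by linarith [Real.pi_pos]) (by linarith [hθ.2])
      (by linarith [hθ.1])

lemma polar_repr (v : EuclideanSpace ℝ (Fin 2)) (r₀ μ : ℝ) (hr₀ : 0 < r₀)
    (hv : v 0 ^ 2 + v 1 ^ 2 = r₀ ^ 2) (h : 0 ≤ v 0 * Real.cos μ + v 1 * Real.sin μ) :
    ∃ ψ, |ψ| ≤ Real.pi / 2 ∧ v = polPt r₀ (μ + ψ) := by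
  have e := Real.cos_sq_add_sin_sq μ
  set A := (v 0 * Real.cos μ + v 1 * Real.sin μ) / r₀ with hA
  set B := (v 1 * Real.cos μ - v 0 * Real.sin μ) / r₀ with hB
  have hA0 : 0 ≤ A := by positivity
  have hA' : r₀ * A = v 0 * Real.cos μ + v 1 * Real.sin μ := by rw [hA]; field_simp
  have hB' : r₀ * B = v 1 * Real.cos μ - v 0 * Real.sin μ := by rw [hB]; field_simp
  have hAB : A ^ 2 + B ^ 2 = 1 := by
    have : r₀ ^ 2 * (A ^ 2 + B ^ 2) = r₀ ^ 2 * 1 := by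
      rw [mul_add, ← mul_pow, ← mul_pow, hA', hB']
      linear_combination hv + (v 0 ^ 2 + v 1 ^ 2) * e
    exact mul_left_cancel₀ (by positivity) this
  refine ⟨Real.arcsin B, abs_le.2 ⟨Real.neg_pi_div_two_le_arcsin _, Real.arcsin_le_pi_div_two _⟩, ?_⟩
  have hs : Real.sin (Real.arcsin B) = B := Real.sin_arcsin (by nlinarith) (by nlinarith)
  have hc : Real.cos (Real.arcsin B) = A := by
    rw [Real.cos_arcsin, show 1 - B ^ 2 = A ^ 2 by linarith, Real.sqrt_sq hA0]
  ext i
  fin_cases i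
  · change v 0 = polPt r₀ _ 0
    rw [polPt_zero, Real.cos_add, hs, hc]
    linear_combination (-Real.cos μ) * hA' + Real.sin μ * hB' - v 0 * e
  · change v 1 = polPt r₀ _ 1
    rw [polPt_one, Real.sin_add, hs, hc]
    linear_combination (-Real.sin μ) * hA' - Real.cos μ * hB' - v 1 * e

lemma contact (r₀ : ℝ) (hr₀ : 0 < r₀)
    (P : Set (EuclideanSpace ℝ (Fin 2))) (hPfin : P.Finite) (hPne : P.Nonempty)
    (hcr : IsLeast {ρ : ℝ | ∃ cc : EuclideanSpace ℝ (Fin 2), P ⊆ closedBall cc ρ} r₀)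
    (c : EuclideanSpace ℝ (Fin 2)) (hc : P ⊆ closedBall c r₀) (μ : ℝ) :
    ∃ ψ, |ψ| ≤ Real.pi / 2 ∧ c + polPt r₀ (μ + ψ) ∈ P := by
  by_contra hcon
  push Not at hcon
  have hlt : ∀ p ∈ P, ∀ᶠ t in nhdsWithin (0 : ℝ) (Ioi 0), dist p (c + polPt (-t) μ) < r₀ := by
    intro p hp
    have hd := hc hp
    rw [mem_closedBall] at hd
    rcases hd.lt_or_eq with h | h
    · have hcont : Continuous fun t : ℝ => dist p (c + polPt (-t) μ) := by
        unfold polPt; fun_prop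
      have : Filter.Tendsto (fun t : ℝ => dist p (c + polPt (-t) μ)) (nhdsWithin 0 (Ioi 0))
          (nhds (dist p (c + polPt (-0) μ))) := (hcont.tendsto 0).mono_left nhdsWithin_le_nhds
      apply this.eventually_lt_const
      have e : c + polPt (-0) μ = c := by
        ext i; fin_cases i <;> simp [polPt]
      rw [e]; exact h
    · have hsq : (p 0 - c 0) ^ 2 + (p 1 - c 1) ^ 2 = r₀ ^ 2 := by rw [← sq_dist_eq, h]
      have hneg : (p 0 - c 0) * Real.cos μ + (p 1 - c 1) * Real.sin μ < 0 := by
        by_contra hge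
        push Not at hge
        obtain ⟨ψ, h1, h2⟩ := polar_repr (p - c) r₀ μ hr₀ (by simpa using hsq) (by simpa using hge)
        apply hcon ψ h1
        rw [← h2]; simpa using hp
      set b := (p 0 - c 0) * Real.cos μ + (p 1 - c 1) * Real.sin μ with hb
      have : ∀ᶠ t in nhdsWithin (0 : ℝ) (Ioi 0), t < -b :=
        (Filter.eventually_of_mem (Ioo_mem_nhdsGT (by linarith : (0:ℝ) < -b)) fun t ht => ht.2)
      filter_upwards [this, self_mem_nhdsWithin] with t ht ht0
      have ht0' : 0 < t := ht0
      apply lt_of_pow_lt_pow_left₀ 2 hr₀.le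
      rw [sq_dist_eq]
      simp only [PiLp.add_apply, polPt_zero, polPt_one]
      have e := Real.cos_sq_add_sin_sq μ
      have : (p 0 - (c 0 + -t * Real.cos μ)) ^ 2 + (p 1 - (c 1 + -t * Real.sin μ)) ^ 2
          = r₀ ^ 2 + 2 * t * b + t ^ 2 := by
        rw [hb]; linear_combination hsq + t ^ 2 * e
      rw [this]
      nlinarith
  obtain ⟨t, ht⟩ := ((Filter.eventually_all_finite hPfin).2 hlt).exists
  obtain ⟨q, hq, hmax⟩ := hPfin.exists_maximalFor (fun p => dist p (c + polPt (-t) μ)) P hPne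
  have hmem : dist q (c + polPt (-t) μ) ∈
      {ρ : ℝ | ∃ cc : EuclideanSpace ℝ (Fin 2), P ⊆ closedBall cc ρ} := by
    refine ⟨c + polPt (-t) μ, fun p hp => ?_⟩
    rw [mem_closedBall]
    rcases le_total (dist p (c + polPt (-t) μ)) (dist q (c + polPt (-t) μ)) with h | h
    · exact h
    · exact hmax hp h
  have := hcr.2 hmem
  linarith [ht q hq]

lemma three_points (r₀ : ℝ) (P : Set (EuclideanSpace ℝ (Fin 2))) (hPfin : P.Finite)
    (c : EuclideanSpace ℝ (Fin 2))
    (h : ∀ μ, ∃ ψ, |ψ| ≤ Real.pi / 2 ∧ c + polPt r₀ (μ + ψ) ∈ P) :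
    ∃ τ₁ τ₂ τ₃ : ℝ, τ₁ ≤ τ₂ ∧ τ₂ ≤ τ₃ ∧ τ₃ ≤ τ₁ + 2 * Real.pi ∧ τ₂ - τ₁ ≤ Real.pi ∧
      τ₃ - τ₂ ≤ Real.pi ∧ τ₁ + 2 * Real.pi - τ₃ ≤ Real.pi ∧
      c + polPt r₀ τ₁ ∈ P ∧ c + polPt r₀ τ₂ ∈ P ∧ c + polPt r₀ τ₃ ∈ P ∧
      c + polPt r₀ (τ₁ + 2 * Real.pi) ∈ P := by
  have hpi := Real.pi_pos
  set T : Set ℝ := {θ | c + polPt r₀ θ ∈ P} with hT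
  have hTc : IsClosed T := hPfin.isClosed.preimage (by unfold polPt; fun_prop)
  obtain ⟨ψ₀, -, hψ₀⟩ := h 0
  set τ₁ := 0 + ψ₀
  have hper : τ₁ + 2 * Real.pi ∈ T := by
    change c + polPt r₀ _ ∈ P
    simpa [polPt] using hψ₀
  obtain ⟨τ₂, h2, h2max⟩ := ((isCompact_Icc (a := τ₁) (b := τ₁ + Real.pi)).inter_left hTc).exists_isGreatest
    ⟨τ₁, hψ₀, by constructor <;> linarith⟩
  obtain ⟨τ₃, h3, h3min⟩ := ((isCompact_Icc (a := τ₁ + Real.pi)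
    (b := τ₁ + 2 * Real.pi)).inter_left hTc).exists_isLeast
    ⟨τ₁ + 2 * Real.pi, hper, by constructor <;> linarith⟩
  have h2' := h2.2
  have h3' := h3.2
  rw [mem_Icc] at h2' h3'
  refine ⟨τ₁, τ₂, τ₃, h2'.1, by linarith, h3'.2, by linarith, ?_, by linarith, hψ₀, h2.1, h3.1, hper⟩
  by_contra hgap
  push Not at hgap
  obtain ⟨ψ, hψ, hm⟩ := h ((τ₂ + τ₃) / 2)
  have := abs_le.1 hψ
  rcases le_total ((τ₂ + τ₃) / 2 + ψ) (τ₁ + Real.pi) with hle | hle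
  · have := h2max ⟨hm, by constructor <;> linarith⟩
    linarith
  · have := h3min ⟨hm, by constructor <;> linarith⟩
    linarith

/-- In the plane, the r-spindle minimizes the first intrinsic volume among
r-ball convex hulls of finite sets of circumradius r₀. -/
theorem first_intrinsic_volume_spindle_le (r r₀ : ℝ) (hr : r₀ < r) (hr₀ : 0 < r₀)
    (P : Set (EuclideanSpace ℝ (Fin 2))) (hPfin : P.Finite) (hPne : P.Nonempty)
    (hcr : IsLeast {ρ : ℝ | ∃ cc : EuclideanSpace ℝ (Fin 2), P ⊆ closedBall cc ρ} r₀)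
    (V : ℕ → Set (EuclideanSpace ℝ (Fin 2)) → ℝ) (hV : IsIntrinsicVolumes 2 V)
    (x : EuclideanSpace ℝ (Fin 2)) (hx : ‖x‖ = r₀) :
    V 1 (ballHull r {x, -x}) ≤ V 1 (ballHull r P) := by
  have hrp : 0 < r := by linarith
  have hu1 : 0 < unitBallVol 1 :=
    ENNReal.toReal_pos (measure_closedBall_pos _ _ one_pos).ne' measure_closedBall_lt_top.ne
  -- the spindle
  obtain ⟨φ, hφ⟩ : ∃ φ, x = polPt r₀ φ := by
    have hsq : x 0 ^ 2 + x 1 ^ 2 = r₀ ^ 2 := by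
      have := sq_dist_eq x 0
      rw [dist_zero_right, hx] at this
      simpa using this.symm
    rcases le_total 0 (x 0) with h | h
    · obtain ⟨ψ, -, h⟩ := polar_repr x r₀ 0 hr₀ hsq (by simpa using h)
      exact ⟨_, h⟩
    · obtain ⟨ψ, -, h⟩ := polar_repr x r₀ Real.pi hr₀ hsq (by simpa using h)
      exact ⟨_, h⟩
  have hnx : -x = polPt (-r₀) φ := by
    rw [hφ]; ext i; fin_cases i <;> simp [polPt]
  have hSsub : ({x, -x} : Set (EuclideanSpace ℝ (Fin 2))) ⊆ closedBall 0 r := by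
    rintro p (rfl | rfl) <;> simp [hx, hr.le]
  have hSK := ballHull_compact hSsub
  have hSne : (ballHull r {x, -x}).Nonempty := ⟨x, subset_ballHull _ _ (by simp)⟩
  have hS : unitBallVol 1 * V 1 (ballHull r {x, -x}) ≤ 4 * r * Real.arcsin (r₀ / r) := by
    rw [cauchy_formula V hV _ (ballHull_convex _ _) hSK hSne]
    have hc := supp_continuous hSK
    have e := (supp_periodic (K := ballHull r {x, -x})).intervalIntegral_add_eq (-Real.pi) φ
    rw [show -Real.pi + 2 * Real.pi = Real.pi by ring] at e
    rw [e, ← intervalIntegral.integral_add_adjacent_intervals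
      (hc.intervalIntegrable φ (φ + Real.pi)) (hc.intervalIntegrable _ _)]
    have s1 := spindle_sector {x, -x} r r₀ φ hr₀ hr hSK hSne (by
      rintro p (rfl | rfl)
      · exact Or.inl hφ
      · exact Or.inr hnx)
    have s2 := spindle_sector {x, -x} r r₀ (φ + Real.pi) hr₀ hr hSK hSne (by
      rintro p (rfl | rfl)
      · right; rw [hφ]; simp [polPt]
      · left; rw [hnx]; simp [polPt])
    rw [show φ + Real.pi + Real.pi = φ + 2 * Real.pi by ring] at s2
    linarith
  -- the hull
  obtain ⟨c, hc⟩ := hcr.1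
  have hKc : IsCompact (ballHull r P) :=
    ballHull_compact (hc.trans (closedBall_subset_closedBall hr.le))
  have hKne : (ballHull r P).Nonempty := hPne.mono (subset_ballHull _ _)
  have hK : 4 * r * Real.arcsin (r₀ / r) ≤ unitBallVol 1 * V 1 (ballHull r P) := by
    rw [cauchy_formula V hV _ (ballHull_convex _ _) hKc hKne]
    have hcont := supp_continuous hKc
    obtain ⟨τ₁, τ₂, τ₃, o1, o2, o3, g1, g2, g3, m1, m2, m3, m4⟩ :=
      three_points r₀ P hPfin c (contact r₀ hr₀ P hPfin hPne hcr c hc)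
    set h : ℝ → ℝ := fun θ => supp (ballHull r P) θ - (c 0 * Real.cos θ + c 1 * Real.sin θ) with hh
    have hhc : Continuous h := by fun_prop
    have hi : ∀ a b, IntervalIntegrable h volume a b := fun a b => hhc.intervalIntegrable a b
    have hper : Function.Periodic h (2 * Real.pi) := by
      intro θ
      simp [hh, supp_periodic θ]
    have e0 : ∫ θ in (-Real.pi)..Real.pi, supp (ballHull r P) θ
        = ∫ θ in (-Real.pi)..Real.pi, h θ := by
      rw [hh, intervalIntegral.integral_sub (hcont.intervalIntegrable _ _)
        (Continuous.intervalIntegrable (by fun_prop) _ _),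
        intervalIntegral.integral_add (Continuous.intervalIntegrable (by fun_prop) _ _)
        (Continuous.intervalIntegrable (by fun_prop) _ _)]
      simp
    have e := hper.intervalIntegral_add_eq (-Real.pi) τ₁
    rw [show -Real.pi + 2 * Real.pi = Real.pi by ring] at e
    rw [e0, e, ← intervalIntegral.integral_add_adjacent_intervals (hi τ₁ τ₃) (hi _ _),
      ← intervalIntegral.integral_add_adjacent_intervals (hi τ₁ τ₂) (hi _ _)]
    have s1 := hull_sector P c r r₀ τ₁ τ₂ hr₀ hr hKc o1 g1 m1 m2
    have s2 := hull_sector P c r r₀ τ₂ τ₃ hr₀ hr hKc o2 g2 m2 m3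
    have s3 := hull_sector P c r r₀ τ₃ (τ₁ + 2 * Real.pi) hr₀ hr hKc o3 g3 m3 m4
    have s := arcsin_sum_ge (r₀ / r) (by positivity) (by rw [div_lt_one hrp]; exact hr)
      ((τ₂ - τ₁) / 2) ((τ₃ - τ₂) / 2) ((τ₁ + 2 * Real.pi - τ₃) / 2) (by linarith) (by linarith)
      (by linarith) (by linarith) (by ring)
    have := mul_le_mul_of_nonneg_left s (by linarith : 0 ≤ 2 * r)
    linarith
  exact le_of_mul_le_mul_left (hS.trans hK) hu1
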